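/- arXiv:1008.0518 — 8 statements merged into one kernel-verified Lean document; each statement's English description precedes it below -/
import Mathlib

section
/- For every natural number k and every complex number z, the map f ↦ f^(k)(z) (the k-th complex derivative of f evaluated at z) is a continuous linear functional on H. -/
/-- If `H` is a complex Hilbert space of entire functions (realized via an
injective linear map `ι : H →ₗ[ℂ] (ℂ → ℂ)` whose image consists of entire functions) on
which every point evaluation `f ↦ ι f z` is a continuous linear functional, then for every
`k : ℕ` and `z : ℂ` the map `f ↦ (ι f)^(k)(z)` is a continuous linear functional on `H`. -/
theorem derivative_evaluation_continuous_linear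
    {H : Type*} [NormedAddCommGroup H] [InnerProductSpace ℂ H] [CompleteSpace H]
    (ι : H →ₗ[ℂ] (ℂ → ℂ)) (hι : Function.Injective ι)
    (hdiff : ∀ f : H, Differentiable ℂ (ι f))
    (heval : ∀ z : ℂ, ∃ L : H →L[ℂ] ℂ, ∀ f : H, L f = ι f z)
    (k : ℕ) (z : ℂ) :
    ∃ L : H →L[ℂ] ℂ, ∀ f : H, L f = iteratedDeriv k (ι f) z := by
  induction k generalizing z with
  | zero => simpa using heval z
  | succ k ih =>
    choose L hL using ih
    let h : ℕ → ℂ := fun n => 1 / ((n : ℂ) + 1)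
    have hh : Filter.Tendsto h Filter.atTop (nhdsWithin 0 {0}ᶜ) := by
      refine tendsto_nhdsWithin_iff.mpr ⟨tendsto_one_div_add_atTop_nhds_zero_nat, ?_⟩
      refine Filter.Eventually.of_forall fun n => ?_
      simpa [h] using Nat.cast_add_one_ne_zero (R := ℂ) n
    let g : ℕ → H →L[ℂ] ℂ := fun n => (h n)⁻¹ • (L (z + h n) - L z)
    have hlim : ∀ f : H, Filter.Tendsto (fun n => g n f) Filter.atTop
        (nhds (iteratedDeriv (k + 1) (ι f) z)) := by
      intro f
      have hd : Differentiable ℂ (iteratedDeriv k (ι f)) :=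
        ((hdiff f).contDiff (n := ⊤)).differentiable_iteratedDeriv k (by simp)
      have := ((hd z).hasDerivAt.tendsto_slope_zero).comp hh
      rw [iteratedDeriv_succ]
      simpa [g, hL, Function.comp_def] using this
    exact ⟨continuousLinearMapOfTendsto g (f := fun f => iteratedDeriv (k + 1) (ι f) z)
      (tendsto_pi_nhds.mpr hlim), fun f => rfl⟩
end

section
/- For every w ∈ ℂ one has conj(e₁)·𝓔(w) − conj(f₁)·𝓕(w) = −i·Z₁(w). -/
/-- In the one-trivial-zero situation (see context), for every `w ∈ ℂ` one has
`conj(e₁)·𝓔(w) − conj(f₁)·𝓕(w) = −i·Z₁(w)`, where `e₁ = E(z₁)`, `f₁ = F(z₁)`. -/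
theorem conj_e_mul_calE_sub_conj_f_mul_calF
    (E F Z₁ 𝓔 𝓕 : ℂ → ℂ) (z₁ : ℂ)
    (hE : Differentiable ℂ E)
    (hF : ∀ z, F z = starRingEnd ℂ (E (starRingEnd ℂ z)))
    (hZ₁diff : Differentiable ℂ Z₁)
    (hZ₁ : ∀ w, w ≠ starRingEnd ℂ z₁ →
      Z₁ w = (starRingEnd ℂ (E z₁) * E w - starRingEnd ℂ (F z₁) * F w) /
        (Complex.I * (starRingEnd ℂ z₁ - w)))
    (hc₁real : (Z₁ z₁).im = 0) (hc₁ne : Z₁ z₁ ≠ 0)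
    (h𝓔diff : Differentiable ℂ 𝓔) (h𝓕diff : Differentiable ℂ 𝓕)
    (h𝓔 : ∀ w, (w - z₁) * 𝓔 w = E w - E z₁ * Z₁ w / Z₁ z₁)
    (h𝓕 : ∀ w, (w - z₁) * 𝓕 w = F w - F z₁ * Z₁ w / Z₁ z₁) :
    ∀ w : ℂ, starRingEnd ℂ (E z₁) * 𝓔 w - starRingEnd ℂ (F z₁) * 𝓕 w =
      -Complex.I * Z₁ w := by
  have hN : ∀ w, starRingEnd ℂ (E z₁) * E w - starRingEnd ℂ (F z₁) * F w =
      Complex.I * (starRingEnd ℂ z₁ - w) * Z₁ w := by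
    intro w
    by_cases hw : w = starRingEnd ℂ z₁
    · subst hw
      rw [hF z₁, hF (starRingEnd ℂ z₁)]
      simp only [Complex.conj_conj]
      ring
    · have h1 : Complex.I * (starRingEnd ℂ z₁ - w) ≠ 0 :=
        mul_ne_zero Complex.I_ne_zero (sub_ne_zero.mpr (Ne.symm hw))
      rw [hZ₁ w hw]
      field_simp
  have key : (fun w => starRingEnd ℂ (E z₁) * 𝓔 w - starRingEnd ℂ (F z₁) * 𝓕 w) =
      fun w => -Complex.I * Z₁ w := by
    have c1 := h𝓔diff.continuous
    have c2 := h𝓕diff.continuous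
    have c3 := hZ₁diff.continuous
    refine Continuous.ext_on (dense_compl_singleton z₁) (by fun_prop) (by fun_prop) ?_
    intro w hw
    have hw' : w - z₁ ≠ 0 := sub_ne_zero.mpr hw
    apply mul_left_cancel₀ hw'
    have hc : Z₁ w / Z₁ z₁ * Z₁ z₁ = Z₁ w := div_mul_cancel₀ _ hc₁ne
    linear_combination starRingEnd ℂ (E z₁) * h𝓔 w - starRingEnd ℂ (F z₁) * h𝓕 w + hN w
      - Z₁ w / Z₁ z₁ * hN z₁ - Complex.I * (starRingEnd ℂ z₁ - z₁) * hc
  exact fun w => congrFun key w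
end

section
/- For every w ∈ ℂ one has 𝓕(w) = conj(𝓔(conj(w))); that is, 𝓕 = 𝓔*. -/
/-- In the one-trivial-zero situation (see context), `𝓕 = 𝓔*`, i.e. for every
`w ∈ ℂ` one has `𝓕(w) = conj(𝓔(conj(w)))`. -/
theorem calF_eq_calE_star
    (E F Z₁ 𝓔 𝓕 : ℂ → ℂ) (z₁ : ℂ)
    (hE : Differentiable ℂ E)
    (hF : ∀ z, F z = starRingEnd ℂ (E (starRingEnd ℂ z)))
    (hZ₁diff : Differentiable ℂ Z₁)
    (hZ₁ : ∀ w, w ≠ starRingEnd ℂ z₁ →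
      Z₁ w = (starRingEnd ℂ (E z₁) * E w - starRingEnd ℂ (F z₁) * F w) /
        (Complex.I * (starRingEnd ℂ z₁ - w)))
    (hc₁real : (Z₁ z₁).im = 0) (hc₁ne : Z₁ z₁ ≠ 0)
    (h𝓔diff : Differentiable ℂ 𝓔) (h𝓕diff : Differentiable ℂ 𝓕)
    (h𝓔 : ∀ w, (w - z₁) * 𝓔 w = E w - E z₁ * Z₁ w / Z₁ z₁)
    (h𝓕 : ∀ w, (w - z₁) * 𝓕 w = F w - F z₁ * Z₁ w / Z₁ z₁) :
    ∀ w : ℂ, 𝓕 w = starRingEnd ℂ (𝓔 (starRingEnd ℂ w)) := by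
  have key : ∀ w, (w - starRingEnd ℂ z₁) * Z₁ w =
      Complex.I * (starRingEnd ℂ (E z₁) * E w - starRingEnd ℂ (F z₁) * F w) := by
    intro w
    by_cases hw : w = starRingEnd ℂ z₁
    · subst hw
      rw [hF z₁, hF (starRingEnd ℂ z₁)]
      simp only [Complex.conj_conj]
      ring
    · have h1 : starRingEnd ℂ z₁ - w ≠ 0 := fun h => hw (sub_eq_zero.mp h).symm
      rw [hZ₁ w hw]
      have hI := Complex.I_ne_zero
      field_simp
      rw [Complex.I_sq]
      ring
  have hc : starRingEnd ℂ (Z₁ z₁) = Z₁ z₁ := Complex.conj_eq_iff_im.mpr hc₁real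
  have hFc : ∀ w, starRingEnd ℂ (E (starRingEnd ℂ w)) = F w := fun w => (hF w).symm
  have hEc : ∀ w, starRingEnd ℂ (F (starRingEnd ℂ w)) = E w := fun w => by
    rw [hF]; simp
  have key2 : ∀ w, (w - z₁) * starRingEnd ℂ (Z₁ (starRingEnd ℂ w)) =
      -Complex.I * (E z₁ * F w - F z₁ * E w) := by
    intro w
    have h := congrArg (starRingEnd ℂ) (key (starRingEnd ℂ w))
    simpa only [map_mul, map_sub, Complex.conj_conj, Complex.conj_I, hFc, hEc] using h
  have hG : ∀ w, (w - starRingEnd ℂ z₁) * starRingEnd ℂ (𝓔 (starRingEnd ℂ w)) =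
      F w - starRingEnd ℂ (E z₁) * starRingEnd ℂ (Z₁ (starRingEnd ℂ w)) / Z₁ z₁ := by
    intro w
    have h := congrArg (starRingEnd ℂ) (h𝓔 (starRingEnd ℂ w))
    simpa only [map_mul, map_sub, map_div₀, Complex.conj_conj, hFc, hc] using h
  have hcont : Continuous fun w => starRingEnd ℂ (𝓔 (starRingEnd ℂ w)) :=
    Complex.continuous_conj.comp (h𝓔diff.continuous.comp Complex.continuous_conj)
  have hd : Dense (({z₁, starRingEnd ℂ z₁} : Set ℂ)ᶜ) :=
    (Set.toFinite ({z₁, starRingEnd ℂ z₁} : Set ℂ)).countable.dense_compl ℝ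
  refine fun w => congrFun (Continuous.ext_on hd h𝓕diff.continuous hcont ?_) w
  intro w hw
  simp only [Set.mem_compl_iff, Set.mem_insert_iff, Set.mem_singleton_iff, not_or] at hw
  have h1 : w - z₁ ≠ 0 := sub_ne_zero.mpr hw.1
  have h2 : w - starRingEnd ℂ z₁ ≠ 0 := sub_ne_zero.mpr hw.2
  apply mul_left_cancel₀ (mul_ne_zero (mul_ne_zero h1 h2) hc₁ne)
  have a := h𝓕 w
  have b := hG w
  have k0 := key z₁
  have k1 := key w
  have k2 := key2 w
  field_simp at a b
  show (w - z₁) * (w - starRingEnd ℂ z₁) * Z₁ z₁ * 𝓕 w =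
    (w - z₁) * (w - starRingEnd ℂ z₁) * Z₁ z₁ * starRingEnd ℂ (𝓔 (starRingEnd ℂ w))
  linear_combination (w - starRingEnd ℂ z₁) * a - (w - z₁) * b - F z₁ * k1
    + starRingEnd ℂ (E z₁) * k2 + F w * k0
end

section
/- For all z, w ∈ ℂ one has c₁·(conj(E(z))·E(w) − conj(F(z))·F(w)) − i·(conj(z) − w)·conj(Z₁(z))·Z₁(w) = c₁·(w − z₁)·(conj(z) − conj(z₁))·(conj(𝓔(z))·𝓔(w) − conj(𝓕(z))·𝓕(w)). -/
/-- In the one-trivial-zero situation (see context), with `c₁ = Z₁(z₁)`,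
for all `z, w ∈ ℂ`:
`c₁·(conj(E z)·E w − conj(F z)·F w) − i·(conj z − w)·conj(Z₁ z)·Z₁ w
  = c₁·(w − z₁)·(conj z − conj z₁)·(conj(𝓔 z)·𝓔 w − conj(𝓕 z)·𝓕 w)`. -/
theorem key_determinantal_identity_one_zero
    (E F Z₁ 𝓔 𝓕 : ℂ → ℂ) (z₁ : ℂ)
    (hE : Differentiable ℂ E)
    (hF : ∀ z, F z = starRingEnd ℂ (E (starRingEnd ℂ z)))
    (hZ₁diff : Differentiable ℂ Z₁)
    (hZ₁ : ∀ w, w ≠ starRingEnd ℂ z₁ →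
      Z₁ w = (starRingEnd ℂ (E z₁) * E w - starRingEnd ℂ (F z₁) * F w) /
        (Complex.I * (starRingEnd ℂ z₁ - w)))
    (hc₁real : (Z₁ z₁).im = 0) (hc₁ne : Z₁ z₁ ≠ 0)
    (h𝓔diff : Differentiable ℂ 𝓔) (h𝓕diff : Differentiable ℂ 𝓕)
    (h𝓔 : ∀ w, (w - z₁) * 𝓔 w = E w - E z₁ * Z₁ w / Z₁ z₁)
    (h𝓕 : ∀ w, (w - z₁) * 𝓕 w = F w - F z₁ * Z₁ w / Z₁ z₁) :
    ∀ z w : ℂ,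
      Z₁ z₁ * (starRingEnd ℂ (E z) * E w - starRingEnd ℂ (F z) * F w) -
        Complex.I * (starRingEnd ℂ z - w) * starRingEnd ℂ (Z₁ z) * Z₁ w =
      Z₁ z₁ * (w - z₁) * (starRingEnd ℂ z - starRingEnd ℂ z₁) *
        (starRingEnd ℂ (𝓔 z) * 𝓔 w - starRingEnd ℂ (𝓕 z) * 𝓕 w) := by
  have key : ∀ w, starRingEnd ℂ (E z₁) * E w - starRingEnd ℂ (F z₁) * F w =
      Complex.I * (starRingEnd ℂ z₁ - w) * Z₁ w := by
    intro w
    by_cases h : w = starRingEnd ℂ z₁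
    · subst h
      simp only [hF, Complex.conj_conj]
      ring
    · have h2 : starRingEnd ℂ z₁ - w ≠ 0 := sub_ne_zero.mpr (Ne.symm h)
      have h3 := Complex.I_ne_zero
      rw [hZ₁ w h]
      field_simp
  have hc : starRingEnd ℂ (Z₁ z₁) = Z₁ z₁ := Complex.conj_eq_iff_im.mpr hc₁real
  intro z w
  have k1 := key w
  have k2 := congrArg (starRingEnd ℂ) (key z)
  have k3 := key z₁
  have a1 := h𝓔 w
  have a2 := h𝓕 w
  have b1 := congrArg (starRingEnd ℂ) (h𝓔 z)
  have b2 := congrArg (starRingEnd ℂ) (h𝓕 z)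
  simp only [map_sub, map_mul, map_div₀, Complex.conj_conj, Complex.conj_I, hc] at k2 b1 b2
  have hr : Z₁ z₁ * (w - z₁) * (starRingEnd ℂ z - starRingEnd ℂ z₁) *
        (starRingEnd ℂ (𝓔 z) * 𝓔 w - starRingEnd ℂ (𝓕 z) * 𝓕 w) =
      Z₁ z₁ * (((starRingEnd ℂ z - starRingEnd ℂ z₁) * starRingEnd ℂ (𝓔 z)) * ((w - z₁) * 𝓔 w)
        - ((starRingEnd ℂ z - starRingEnd ℂ z₁) * starRingEnd ℂ (𝓕 z)) * ((w - z₁) * 𝓕 w)) := by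
    ring
  rw [hr, a1, a2, b1, b2]
  generalize Z₁ z₁ = c at *
  field_simp
  linear_combination c * starRingEnd ℂ (Z₁ z) * k1 + c * Z₁ w * k2
    - starRingEnd ℂ (Z₁ z) * Z₁ w * k3
end

section
/- For all z, w ∈ ℂ with z ≠ z₁, w ≠ z₁ and conj(z) ≠ w, one has (c₁·Z_z(w) − conj(Z₁(z))·Z₁(w)) / (c₁·(w − z₁)·(conj(z) − conj(z₁))) = (conj(𝓔(z))·𝓔(w) − conj(𝓕(z))·𝓕(w)) / (i·(conj(z) − w)), where Z_z(w) := (conj(E(z))·E(w) − conj(F(z))·F(w))/(i·(conj(z) − w)). -/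
/-- In the one-trivial-zero situation (see context), with `c₁ = Z₁(z₁)` and
`Z_z(w) := (conj(E z)·E w − conj(F z)·F w)/(i·(conj z − w))`, for all `z, w ∈ ℂ` with
`z ≠ z₁`, `w ≠ z₁` and `conj z ≠ w`:
`(c₁·Z_z(w) − conj(Z₁ z)·Z₁ w)/(c₁·(w − z₁)·(conj z − conj z₁))
  = (conj(𝓔 z)·𝓔 w − conj(𝓕 z)·𝓕 w)/(i·(conj z − w))`. -/
theorem reproducing_kernel_one_zero
    (E F Z₁ 𝓔 𝓕 : ℂ → ℂ) (z₁ : ℂ)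
    (hE : Differentiable ℂ E)
    (hF : ∀ z, F z = starRingEnd ℂ (E (starRingEnd ℂ z)))
    (hZ₁diff : Differentiable ℂ Z₁)
    (hZ₁ : ∀ w, w ≠ starRingEnd ℂ z₁ →
      Z₁ w = (starRingEnd ℂ (E z₁) * E w - starRingEnd ℂ (F z₁) * F w) /
        (Complex.I * (starRingEnd ℂ z₁ - w)))
    (hc₁real : (Z₁ z₁).im = 0) (hc₁ne : Z₁ z₁ ≠ 0)
    (h𝓔diff : Differentiable ℂ 𝓔) (h𝓕diff : Differentiable ℂ 𝓕)
    (h𝓔 : ∀ w, (w - z₁) * 𝓔 w = E w - E z₁ * Z₁ w / Z₁ z₁)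
    (h𝓕 : ∀ w, (w - z₁) * 𝓕 w = F w - F z₁ * Z₁ w / Z₁ z₁) :
    ∀ z w : ℂ, z ≠ z₁ → w ≠ z₁ → starRingEnd ℂ z ≠ w →
      (Z₁ z₁ * ((starRingEnd ℂ (E z) * E w - starRingEnd ℂ (F z) * F w) /
          (Complex.I * (starRingEnd ℂ z - w))) -
         starRingEnd ℂ (Z₁ z) * Z₁ w) /
        (Z₁ z₁ * (w - z₁) * (starRingEnd ℂ z - starRingEnd ℂ z₁)) =
      (starRingEnd ℂ (𝓔 z) * 𝓔 w - starRingEnd ℂ (𝓕 z) * 𝓕 w) /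
        (Complex.I * (starRingEnd ℂ z - w)) := by
  intro z w hz hw hzw
  have hK : ∀ w, starRingEnd ℂ (E z₁) * E w - starRingEnd ℂ (F z₁) * F w =
      Complex.I * (starRingEnd ℂ z₁ - w) * Z₁ w := by
    intro w
    by_cases h : w = starRingEnd ℂ z₁
    · subst h
      rw [hF z₁, hF (starRingEnd ℂ z₁)]
      simp only [Complex.conj_conj]
      ring
    · have h' : starRingEnd ℂ z₁ - w ≠ 0 := sub_ne_zero.mpr (Ne.symm h)
      have hI := Complex.I_ne_zero
      rw [hZ₁ w h]
      field_simp
  have hcc : starRingEnd ℂ (Z₁ z₁) = Z₁ z₁ := Complex.conj_eq_iff_im.mpr hc₁real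
  have k1 := hK z₁
  have k2 := hK w
  have k3 := congrArg (starRingEnd ℂ) (hK z)
  have a1 := h𝓔 w
  have a2 := h𝓕 w
  have a3 := congrArg (starRingEnd ℂ) (h𝓔 z)
  have a4 := congrArg (starRingEnd ℂ) (h𝓕 z)
  simp only [map_sub, map_mul, map_div₀, Complex.conj_conj, Complex.conj_I, hcc] at k3 a3 a4
  have n1 : w - z₁ ≠ 0 := sub_ne_zero.mpr hw
  have n2 : starRingEnd ℂ z - starRingEnd ℂ z₁ ≠ 0 :=
    sub_ne_zero.mpr fun h => hz ((starRingEnd ℂ).injective h)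
  have n3 : starRingEnd ℂ z - w ≠ 0 := sub_ne_zero.mpr hzw
  have hI := Complex.I_ne_zero
  generalize starRingEnd ℂ (𝓔 z) = Ez' at *
  generalize starRingEnd ℂ (𝓕 z) = Fz' at *
  generalize starRingEnd ℂ (E z) = Ez at *
  generalize starRingEnd ℂ (F z) = Fz at *
  generalize starRingEnd ℂ (E z₁) = e' at *
  generalize starRingEnd ℂ (F z₁) = f' at *
  generalize starRingEnd ℂ (Z₁ z) = Zz at *
  generalize starRingEnd ℂ z = z' at *
  generalize starRingEnd ℂ z₁ = z₁' at *
  have key : (w - z₁) * (z' - z₁') * (Ez' * 𝓔 w - Fz' * 𝓕 w) =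
      (Ez * E w - Fz * F w) - Complex.I * (z' - w) * Zz * Z₁ w / Z₁ z₁ := by
    have e1 : (w - z₁) * (z' - z₁') * (Ez' * 𝓔 w - Fz' * 𝓕 w) =
        ((z' - z₁') * Ez') * ((w - z₁) * 𝓔 w) - ((z' - z₁') * Fz') * ((w - z₁) * 𝓕 w) := by ring
    rw [e1, a1, a2, a3, a4]
    field_simp
    linear_combination (Zz * Z₁ w) * k1 - (Zz * Z₁ z₁) * k2 - (Z₁ w * Z₁ z₁) * k3
  have e2 : Ez' * 𝓔 w - Fz' * 𝓕 w = ((Ez * E w - Fz * F w) -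
      Complex.I * (z' - w) * Zz * Z₁ w / Z₁ z₁) / ((w - z₁) * (z' - z₁')) := by
    rw [← key]
    field_simp
  rw [e2]
  field_simp
end

section
/- If f ∈ H satisfies f^(k_i)(z_i) = 0 for all i = 1, …, n, then the function g(z) := (∏_{i=1}^n (z − z_i)/(z − conj(z_i))) · f*(z), where f*(z) := conj(f(conj(z))) (and g is extended to an entire function, the zeros of f* at the points conj(z_i) cancelling the poles), belongs to H, has the same norm as f, and satisfies g^(k_i)(z_i) = 0 for all i = 1, …, n. -/
theorem iteratedDeriv_pow_mul_aux (a : ℂ) (k : ℕ) : ∀ u : ℂ → ℂ, Differentiable ℂ u →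
    iteratedDeriv k (fun z => (z - a) ^ k * u z) a = k.factorial * u a := by
  induction k with
  | zero => intro u _; simp
  | succ k ih =>
    intro u hu
    have hd : deriv (fun z => (z - a) ^ (k + 1) * u z) =
        fun z => (z - a) ^ k * (((k : ℂ) + 1) * u z + (z - a) * deriv u z) := by
      funext z
      have h1 : HasDerivAt (fun z : ℂ => (z - a) ^ (k + 1))
          (((k + 1 : ℕ) : ℂ) * (z - a) ^ k * 1) z := by
        exact ((hasDerivAt_id z).sub_const a).pow (k + 1)
      have h2 := h1.mul (hu z).hasDerivAt
      have h3 := h2.deriv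
      refine Eq.trans h3 ?_
      push_cast
      ring
    have hu' : Differentiable ℂ (deriv u) := by
      have h : ContDiff ℂ 2 u := hu.contDiff
      exact (h.iterate_deriv' 1 1).differentiable (by norm_num)
    rw [iteratedDeriv_succ', hd, ih _ (by fun_prop)]
    simp [Nat.factorial_succ]
    ring

theorem prod_split_aux {α : Type*} [DecidableEq α] (s : Finset α) (σ : α → ℂ) (a z : ℂ) :
    ∏ i ∈ s, (z - σ i) = (z - a) ^ (s.filter fun j => σ j = a).card *
      ∏ i ∈ s.filter (fun j => ¬ σ j = a), (z - σ i) := by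
  rw [← Finset.prod_filter_mul_prod_filter_not s (fun j => σ j = a)]
  congr 1
  apply Finset.prod_eq_pow_card
  intro i hi
  rw [(Finset.mem_filter.1 hi).2]

theorem factor_aux {n : ℕ} (σ : Fin n → ℂ) (F : ℂ → ℂ) (hF : Differentiable ℂ F)
    (hz : ∀ i, iteratedDeriv (Finset.univ.filter fun j => j < i ∧ σ j = σ i).card F (σ i) = 0) :
    ∀ m ≤ n, ∃ h : ℂ → ℂ, Differentiable ℂ h ∧
      ∀ z, F z = (∏ i ∈ Finset.univ.filter (fun i : Fin n => i.val < m), (z - σ i)) * h z := by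
  intro m
  induction m with
  | zero => intro _; exact ⟨F, hF, by simp⟩
  | succ m ih =>
    intro hm
    obtain ⟨h, hh, hFh⟩ := ih (by omega)
    let i : Fin n := ⟨m, by omega⟩
    have hS : Finset.univ.filter (fun j : Fin n => j.val < m) =
        Finset.univ.filter (fun j => j < i) := by
      ext j; simp [i, Fin.lt_def]
    have hS' : Finset.univ.filter (fun j : Fin n => j.val < m + 1) =
        insert i (Finset.univ.filter (fun j => j < i)) := by
      ext j; simp [i, Fin.lt_def, Fin.ext_iff]; omega
    rw [hS] at hFh
    have h0 : h (σ i) = 0 := by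
      have := hz i
      rw [← Finset.filter_filter] at this
      have hFe : F = fun z => (z - σ i) ^
          ((Finset.univ.filter fun j => j < i).filter fun j => σ j = σ i).card *
          ((∏ j ∈ (Finset.univ.filter fun j => j < i).filter (fun j => ¬ σ j = σ i),
            (z - σ j)) * h z) := by
        funext z
        rw [hFh, prod_split_aux _ σ (σ i), mul_assoc]
      rw [hFe, iteratedDeriv_pow_mul_aux _ _ _ (by fun_prop)] at this
      rcases mul_eq_zero.1 this with h1 | h1
      · exact absurd h1 (by exact_mod_cast Nat.factorial_ne_zero _)
      rcases mul_eq_zero.1 h1 with h2 | h2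
      · obtain ⟨j, hj, hj0⟩ := Finset.prod_eq_zero_iff.1 h2
        exact absurd (sub_eq_zero.1 hj0).symm (Finset.mem_filter.1 hj).2
      · exact h2
    refine ⟨dslope h (σ i), ?_, ?_⟩
    · rw [← differentiableOn_univ, Complex.differentiableOn_dslope Filter.univ_mem]
      exact hh.differentiableOn
    · intro z
      have := sub_smul_dslope h (σ i) z
      rw [h0, sub_zero, smul_eq_mul] at this
      rw [hS', Finset.prod_insert (by simp), hFh, ← this]
      ring

/-- Let `H` be a Hilbert space of entire functions with continuous point
evaluations, satisfying de Branges axioms (1) and (3), and let `σ = (z₁, …, zₙ)` be a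
finite sequence of (not necessarily distinct) points with multiplicity counters `k i`.
If `f ∈ H` satisfies `f^(k_i)(z_i) = 0` for all `i`, then the function
`g(z) = (∏ (z − z_i)/(z − conj z_i)) · f*(z)` (where `f*(z) = conj(f(conj z))`, extended
to an entire function) belongs to `H`, has the same norm as `f`, and satisfies
`g^(k_i)(z_i) = 0` for all `i`. -/
theorem star_times_blaschke_in_Hsigma
    {H : Type*} [NormedAddCommGroup H] [InnerProductSpace ℂ H] [CompleteSpace H]
    (ι : H →ₗ[ℂ] (ℂ → ℂ)) (hι : Function.Injective ι)
    (hdiff : ∀ f : H, Differentiable ℂ (ι f))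
    (heval : ∀ z : ℂ, ∃ L : H →L[ℂ] ℂ, ∀ f : H, L f = ι f z)
    (axiom1 : ∀ (f : H) (z₀ : ℂ), ι f z₀ = 0 →
      ∃ g : H, ‖g‖ = ‖f‖ ∧
        ∀ z : ℂ, z ≠ z₀ → ι g z = ((z - starRingEnd ℂ z₀) / (z - z₀)) * ι f z)
    (axiom3 : ∀ f : H, ∃ fs : H, ‖fs‖ = ‖f‖ ∧
      ∀ z : ℂ, ι fs z = starRingEnd ℂ (ι f (starRingEnd ℂ z)))
    {n : ℕ} (σ : Fin n → ℂ) (k : Fin n → ℕ)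
    (hk : ∀ i, k i = (Finset.univ.filter fun j => j < i ∧ σ j = σ i).card) :
    ∀ f : H, (∀ i, iteratedDeriv (k i) (ι f) (σ i) = 0) →
      ∃ g : H, ‖g‖ = ‖f‖ ∧
        (∀ i, iteratedDeriv (k i) (ι g) (σ i) = 0) ∧
        ∀ z : ℂ, (∀ i, z ≠ starRingEnd ℂ (σ i)) →
          ι g z = (∏ i, (z - σ i) / (z - starRingEnd ℂ (σ i))) *
            starRingEnd ℂ (ι f (starRingEnd ℂ z)) := by
  intro f hf
  obtain ⟨h, hh, hfh⟩ := factor_aux σ (ι f) (hdiff f)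
    (fun i => by rw [← hk i]; exact hf i) n le_rfl
  have huniv : Finset.univ.filter (fun i : Fin n => i.val < n) = Finset.univ := by
    ext j; simp
  rw [huniv] at hfh
  obtain ⟨fs, hfs, hfse⟩ := axiom3 f
  have key : ∀ (s : Finset (Fin n)) (f0 : H) (u : ℂ → ℂ), Continuous u →
      (∀ z, ι f0 z = (∏ i ∈ s, (z - starRingEnd ℂ (σ i))) * u z) →
      ∃ g : H, ‖g‖ = ‖f0‖ ∧ ∀ z, ι g z = (∏ i ∈ s, (z - σ i)) * u z := by
    intro s
    induction s using Finset.induction_on with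
    | empty => intro f0 u _ h; exact ⟨f0, rfl, by simpa using h⟩
    | insert a s ha ih =>
      intro f0 u hu h0
      simp only [Finset.prod_insert ha] at h0 ⊢
      obtain ⟨g, hg, hge⟩ := axiom1 f0 (starRingEnd ℂ (σ a)) (by rw [h0]; simp)
      have hcont : Continuous fun z => (∏ i ∈ s, (z - starRingEnd ℂ (σ i))) *
          ((z - σ a) * u z) := by fun_prop
      have heq : ι g = fun z => (∏ i ∈ s, (z - starRingEnd ℂ (σ i))) *
          ((z - σ a) * u z) := by
        refine Continuous.ext_on (dense_compl_singleton (starRingEnd ℂ (σ a)))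
          (hdiff g).continuous hcont ?_
        intro z hz
        have hz' : z - starRingEnd ℂ (σ a) ≠ 0 := sub_ne_zero.2 hz
        simp only
        rw [hge z hz, h0, Complex.conj_conj]
        field_simp
      obtain ⟨g', hg', hge'⟩ := ih g (fun z => (z - σ a) * u z) (by fun_prop)
        (fun z => congrFun heq z)
      exact ⟨g', hg'.trans hg, fun z => by rw [hge']; ring⟩
  let hs : ℂ → ℂ := fun z => starRingEnd ℂ (h (starRingEnd ℂ z))
  have hsd : Differentiable ℂ hs := fun z => by
    have := (hh (starRingEnd ℂ z)).conj_conj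
    simpa [hs, Function.comp_def] using this
  have hse : ∀ z, ι fs z = (∏ i, (z - starRingEnd ℂ (σ i))) * hs z := by
    intro z
    rw [hfse, hfh]
    simp [hs, map_prod]
  obtain ⟨g, hg, hge⟩ := key Finset.univ fs hs hsd.continuous hse
  refine ⟨g, hg.trans hfs, ?_, ?_⟩
  · intro i
    have hlt : k i < (Finset.univ.filter fun j => σ j = σ i).card := by
      rw [hk i]
      apply Finset.card_lt_card
      rw [Finset.ssubset_iff_of_subset (by intro j; simp)]
      exact ⟨i, by simp, by simp⟩
    obtain ⟨d, hd⟩ := Nat.exists_eq_add_of_lt hlt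
    have : ι g = fun z => (z - σ i) ^ (k i) * ((z - σ i) ^ (d + 1) *
        ((∏ j ∈ Finset.univ.filter (fun j => ¬ σ j = σ i), (z - σ j)) * hs z)) := by
      funext z
      rw [hge, prod_split_aux _ σ (σ i), hd]
      ring
    rw [this, iteratedDeriv_pow_mul_aux _ _ _ (by fun_prop)]
    simp
  · intro z hz
    rw [← hfse, hse, hge, Finset.prod_div_distrib]
    have : ∏ i, (z - starRingEnd ℂ (σ i)) ≠ 0 :=
      Finset.prod_ne_zero_iff.2 fun i _ => sub_ne_zero.2 (hz i)
    field_simp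
end

section
/- Let f ∈ H satisfy f^(k_i)(z_i) = 0 for all i = 1, …, n, let F be the entire function with F(z) = γ(z)·f(z) away from {z₁, …, zₙ}, and let z₀ ∈ ℂ satisfy F(z₀) = 0. Then there exists g ∈ H with g^(k_i)(z_i) = 0 for all i, ‖g‖ = ‖f‖, and γ(z)·g(z) = ((z − conj(z₀))/(z − z₀))·F(z) for all z outside {z₀, z₁, …, zₙ}. -/
lemma aux_iteratedDeriv_zero (a : ℂ) (m : ℕ) (h : ℂ → ℂ) (hh : Differentiable ℂ h)
    (g : ℂ → ℂ) (hg : ∀ z, g z = (z - a) ^ (m + 1) * h z) : iteratedDeriv m g a = 0 := by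
  induction m generalizing h g with
  | zero => simp [hg]
  | succ m ih =>
    rw [iteratedDeriv_succ']
    refine ih (fun z => (m + 2) * h z + (z - a) * deriv h z) ?_ _ ?_
    · have : Differentiable ℂ (deriv h) := (hh.contDiff (n := 2)).differentiable_deriv_two
      fun_prop
    · intro z
      have e : g = fun z => (z - a) ^ (m + 1 + 1) * h z := funext hg
      have h1 : HasDerivAt (fun z : ℂ => z - a) 1 z := (hasDerivAt_id z).sub_const a
      have := (h1.pow (m + 1 + 1)).mul (hh z).hasDerivAt
      rw [e]
      refine this.deriv.trans ?_
      simp only [Pi.pow_apply]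
      push_cast
      ring

lemma aux_eq (S : Set ℂ) (hS : S.Finite) (f g : ℂ → ℂ) (hf : Continuous f) (hg : Continuous g)
    (h : ∀ z, z ∉ S → f z = g z) (z : ℂ) : f z = g z :=
  congrFun (Continuous.ext_on (hS.countable.dense_compl ℂ) hf hg h) z

/-- Let `H` be a Hilbert space of entire functions with continuous point
evaluations, satisfying de Branges axiom (1), `σ = (z₁, …, zₙ)` a finite sequence of (not
necessarily distinct) points with multiplicity counters `k i`, and `γ z = 1/∏ (z − z_i)`.
Let `f ∈ H` satisfy `f^(k_i)(z_i) = 0` for all `i`, let `F` be the entire function with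
`F(z) = γ(z)·f(z)` away from `{z₁, …, zₙ}`, and let `z₀` satisfy `F(z₀) = 0`. Then there
exists `g ∈ H` with `g^(k_i)(z_i) = 0` for all `i`, `‖g‖ = ‖f‖`, and
`γ(z)·g(z) = ((z − conj z₀)/(z − z₀))·F(z)` for all `z` outside `{z₀, z₁, …, zₙ}`. -/
theorem Hsigma_blaschke_stability
    {H : Type*} [NormedAddCommGroup H] [InnerProductSpace ℂ H] [CompleteSpace H]
    (ι : H →ₗ[ℂ] (ℂ → ℂ)) (hι : Function.Injective ι)
    (hdiff : ∀ f : H, Differentiable ℂ (ι f))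
    (heval : ∀ z : ℂ, ∃ L : H →L[ℂ] ℂ, ∀ f : H, L f = ι f z)
    (axiom1 : ∀ (f : H) (z₀ : ℂ), ι f z₀ = 0 →
      ∃ g : H, ‖g‖ = ‖f‖ ∧
        ∀ z : ℂ, z ≠ z₀ → ι g z = ((z - starRingEnd ℂ z₀) / (z - z₀)) * ι f z)
    {n : ℕ} (σ : Fin n → ℂ) (k : Fin n → ℕ)
    (hk : ∀ i, k i = (Finset.univ.filter fun j => j < i ∧ σ j = σ i).card)
    (γ : ℂ → ℂ) (hγ : ∀ z, γ z = (∏ i, (z - σ i))⁻¹)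
    (f : H) (hf : ∀ i, iteratedDeriv (k i) (ι f) (σ i) = 0)
    (F : ℂ → ℂ) (hFdiff : Differentiable ℂ F)
    (hF : ∀ z : ℂ, (∀ i, z ≠ σ i) → F z = γ z * ι f z)
    (z₀ : ℂ) (hz₀ : F z₀ = 0) :
    ∃ g : H, (∀ i, iteratedDeriv (k i) (ι g) (σ i) = 0) ∧ ‖g‖ = ‖f‖ ∧
      ∀ z : ℂ, z ≠ z₀ → (∀ i, z ≠ σ i) →
        γ z * ι g z = ((z - starRingEnd ℂ z₀) / (z - z₀)) * F z := by
  have hfP : ∀ z, ι f z = (∏ i, (z - σ i)) * F z := by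
    refine aux_eq (Set.range σ) (Set.finite_range σ) _ _ (hdiff f).continuous
      (by have := hFdiff.continuous; fun_prop) ?_
    intro z hz
    have hz' : ∀ i, z ≠ σ i := fun i h => hz ⟨i, h.symm⟩
    have hP : ∏ i, (z - σ i) ≠ 0 := Finset.prod_ne_zero_iff.mpr fun i _ => sub_ne_zero.mpr (hz' i)
    rw [hF z hz', hγ, mul_inv_cancel_left₀ hP]
  obtain ⟨g, hgn, hg⟩ := axiom1 f z₀ (by rw [hfP, hz₀, mul_zero])
  refine ⟨g, ?_, hgn, ?_⟩
  · have hG : Differentiable ℂ (dslope F z₀) := by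
      rw [← differentiableOn_univ]
      exact (Complex.differentiableOn_dslope Filter.univ_mem).mpr hFdiff.differentiableOn
    have hFG : ∀ z, F z = (z - z₀) * dslope F z₀ z := by
      intro z
      have := sub_smul_dslope F z₀ z
      rw [hz₀, sub_zero, smul_eq_mul] at this
      exact this.symm
    have hgP : ∀ z, ι g z = (∏ i, (z - σ i)) * ((z - starRingEnd ℂ z₀) * dslope F z₀ z) := by
      refine aux_eq {z₀} (Set.finite_singleton _) _ _ (hdiff g).continuous
        (by have := hG.continuous; fun_prop) ?_
      intro z hz
      have hz' : z - z₀ ≠ 0 := sub_ne_zero.mpr hz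
      rw [hg z hz, hfP, hFG]
      field_simp
    intro i
    let T : Finset (Fin n) := Finset.univ.filter fun j => j ≤ i ∧ σ j = σ i
    have hT : T.card = k i + 1 := by
      have : T = insert i (Finset.univ.filter fun j => j < i ∧ σ j = σ i) := by
        ext j
        simp only [T, Finset.mem_filter, Finset.mem_univ, true_and, Finset.mem_insert]
        constructor
        · rintro ⟨h1, h2⟩
          rcases h1.eq_or_lt with h | h
          · exact Or.inl h
          · exact Or.inr ⟨h, h2⟩
        · rintro (rfl | ⟨h1, h2⟩)
          · exact ⟨le_rfl, rfl⟩
          · exact ⟨h1.le, h2⟩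
      rw [this, Finset.card_insert_of_notMem (by simp), hk i]
    refine aux_iteratedDeriv_zero (σ i) (k i)
      (fun z => (∏ j ∈ Tᶜ, (z - σ j)) * ((z - starRingEnd ℂ z₀) * dslope F z₀ z)) (by fun_prop) _ ?_
    intro z
    have : ∏ j ∈ T, (z - σ j) = (z - σ i) ^ (k i + 1) := by
      rw [← hT]
      refine Finset.prod_eq_pow_card fun j hj => ?_
      rw [(Finset.mem_filter.mp hj).2.2]
    rw [hgP, ← Finset.prod_mul_prod_compl T, this, mul_assoc]
  · intro z hz hz'
    rw [hg z hz, hF z hz']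
    ring
end

section
/- For every z ∈ ℂ with z ≠ conj(z_i) for all i and z ∉ {z₁, …, zₙ}, one has f_n(z) = (∏_{i=1}^n (z − z_i)/(z − conj(z_i))) · conj(e_n(conj(z))). -/
open Matrix in
/-- Algebraic core: displacement identity for bordered determinants. -/
theorem bordered_det_aux {n : ℕ} (A : Matrix (Fin n) (Fin n) ℂ) (a w E F s t : Fin n → ℂ) (z e : ℂ)
    (hE : ∀ i, E i ≠ 0) (hF : ∀ i, F i ≠ 0) (he : e ≠ 0)
    (hA : ∀ i j, (a i - w j) * A i j = -Complex.I * (E i * (F j)⁻¹ - (E i)⁻¹ * F j))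
    (hs : ∀ j, (z - w j) * s j = -Complex.I * (e * (F j)⁻¹ - e⁻¹ * F j))
    (ht : ∀ i, (z - a i) * t i = -Complex.I * (e * (E i)⁻¹ - e⁻¹ * E i)) :
    (fromBlocks A (of fun i (_ : Fin 1) => E i) (of fun (_ : Fin 1) j => s j)
        (of fun (_ _ : Fin 1) => e)).det * ∏ i, (z - w i) =
    (∏ i, (z - a i)) *
      (fromBlocks A (of fun i (_ : Fin 1) => t i) (of fun (_ : Fin 1) j => F j)
        (of fun (_ _ : Fin 1) => e)).det := by
  have key : fromBlocks A (of fun i (_ : Fin 1) => E i) (of fun (_ : Fin 1) j => s j)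
        (of fun (_ _ : Fin 1) => e) *
      fromBlocks (diagonal fun j => z - w j) 0 (of fun (_ : Fin 1) j => Complex.I * (F j)⁻¹) 1 =
      fromBlocks (diagonal fun i => z - a i) (of fun i (_ : Fin 1) => Complex.I * (E i)⁻¹) 0
        (diagonal fun _ : Fin 1 => Complex.I * e⁻¹) *
      fromBlocks A (of fun i (_ : Fin 1) => t i) (of fun (_ : Fin 1) j => F j)
        (of fun (_ _ : Fin 1) => e) *
      fromBlocks 1 0 0 (diagonal fun _ : Fin 1 => -Complex.I * e) := by
    have hI := Complex.I_mul_I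
    rw [fromBlocks_multiply, fromBlocks_multiply, fromBlocks_multiply]
    congr 1
    · ext i j
      simp [Matrix.mul_apply, diagonal_apply]
      linear_combination hA i j
    · ext i j
      obtain rfl : j = 0 := Subsingleton.elim _ _
      simp [Matrix.mul_apply, diagonal_apply]
      have h1 := ht i
      have h2 : e * e⁻¹ = 1 := mul_inv_cancel₀ he
      linear_combination (Complex.I * e) * h1 - E i * h2 + (E i * (e * e⁻¹ ) ) * hI
    · ext i j
      obtain rfl : i = 0 := Subsingleton.elim _ _
      simp [Matrix.mul_apply, diagonal_apply]
      have h1 := hs j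
      linear_combination h1
    · ext i j
      obtain rfl : i = 0 := Subsingleton.elim _ _
      obtain rfl : j = 0 := Subsingleton.elim _ _
      simp [Matrix.mul_apply, diagonal_apply]
      have h2 : e * e⁻¹ = 1 := mul_inv_cancel₀ he
      linear_combination (-e) * h2 + (e * (e * e⁻¹ )) * hI
  have hd := congrArg Matrix.det key
  rw [det_mul, det_mul, det_mul, det_fromBlocks_zero₁₂, det_fromBlocks_zero₂₁,
    det_fromBlocks_zero₂₁] at hd
  simp only [det_diagonal, det_one, Finset.univ_unique, Finset.prod_singleton, mul_one,
    one_mul] at hd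
  rw [hd]
  have h2 : e * e⁻¹ = 1 := mul_inv_cancel₀ he
  have hI := Complex.I_mul_I
  generalize (fromBlocks A (of fun i (_ : Fin 1) => t i) (of fun (_ : Fin 1) j => F j)
        (of fun (_ _ : Fin 1) => e)).det = G
  generalize (∏ i, (z - a i)) = P
  linear_combination (P * G) * h2 - (P * G * (e * e⁻¹)) * hI

theorem two_sin_aux (x u v : ℂ) :
    2 * Complex.sin (x * (u - v)) =
      -Complex.I * (Complex.exp (Complex.I * x * u) * (Complex.exp (Complex.I * x * v))⁻¹ -
        (Complex.exp (Complex.I * x * u))⁻¹ * Complex.exp (Complex.I * x * v)) := by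
  rw [← Complex.exp_neg, ← Complex.exp_neg, ← Complex.exp_add, ← Complex.exp_add, Complex.sin]
  rw [show -(x * (u - v)) * Complex.I = -(Complex.I * x * u) + Complex.I * x * v by ring,
    show (x * (u - v)) * Complex.I = (Complex.I * x * u) + -(Complex.I * x * v) by ring]
  ring


/-- Paley–Wiener example. Let `x > 0`, `z₁, …, zₙ` distinct complex numbers,
and `S a b = 2·sin(x·(conj a − b))/(conj a − b)` (with value `2x` when `conj a = b`), the
reproducing kernel of `PW_x`. With the determinants `e_n(z)`, `f_n(z)` of the paper, for
every `z` with `z ≠ conj z_i` for all `i` and `z ∉ {z₁, …, zₙ}` one has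
`f_n(z) = (∏ (z − z_i)/(z − conj z_i)) · conj(e_n(conj z))`. -/
theorem paley_wiener_fn_eq_blaschke_conj_en
    {n : ℕ} (x : ℝ) (hx : 0 < x) (σ : Fin n → ℂ) (hσ : Function.Injective σ)
    (S : ℂ → ℂ → ℂ)
    (hS : ∀ a b : ℂ, starRingEnd ℂ a ≠ b →
      S a b = 2 * Complex.sin ((x : ℂ) * (starRingEnd ℂ a - b)) / (starRingEnd ℂ a - b))
    (hS' : ∀ a b : ℂ, starRingEnd ℂ a = b → S a b = 2 * (x : ℂ)) :
    ∀ z : ℂ, (∀ i, z ≠ starRingEnd ℂ (σ i)) → (∀ i, z ≠ σ i) →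
      (Matrix.of fun i j : Fin (n + 1) =>
          Fin.lastCases (Complex.exp (Complex.I * (x : ℂ) * (Fin.snoc σ z : Fin (n + 1) → ℂ) i))
            (fun j' : Fin n => S (σ j') ((Fin.snoc σ z : Fin (n + 1) → ℂ) i)) j).det =
      (∏ i, (z - σ i) / (z - starRingEnd ℂ (σ i))) *
        starRingEnd ℂ
          ((Matrix.of fun i j : Fin (n + 1) =>
            Fin.lastCases
              (Complex.exp (-(Complex.I * (x : ℂ) * (Fin.snoc σ (starRingEnd ℂ z) : Fin (n + 1) → ℂ) i)))
              (fun j' : Fin n => S (σ j') ((Fin.snoc σ (starRingEnd ℂ z) : Fin (n + 1) → ℂ) i)) j).det) := by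

  intro z hz1 hz2
  have hSm : ∀ a b : ℂ, (b - starRingEnd ℂ a) * S a b =
      2 * Complex.sin ((x : ℂ) * (b - starRingEnd ℂ a)) := by
    intro a b
    by_cases h : starRingEnd ℂ a = b
    · rw [h]; simp
    · rw [hS a b h]
      have h' : starRingEnd ℂ a - b ≠ 0 := sub_ne_zero.mpr h
      rw [show (x : ℂ) * (b - starRingEnd ℂ a) = -((x : ℂ) * (starRingEnd ℂ a - b)) by ring,
        Complex.sin_neg]
      field_simp
      ring
  have hconj : ∀ a b : ℂ, starRingEnd ℂ (S a b) = S b a := by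
    intro a b
    by_cases h : starRingEnd ℂ a = b
    · rw [hS' a b h, hS' b a (by rw [← h]; simp)]
      rw [map_mul, map_ofNat, Complex.conj_ofReal]
    · have h2 : starRingEnd ℂ b ≠ a := fun h3 => h (by rw [← h3]; simp)
      rw [hS a b h, hS b a h2]
      simp only [map_div₀, map_mul, map_sub, ← Complex.sin_conj, Complex.conj_ofReal,
        Complex.conj_conj, map_ofNat]
      rw [show (x : ℂ) * (a - starRingEnd ℂ b) = -((x : ℂ) * (starRingEnd ℂ b - a)) by ring,
        Complex.sin_neg, ← neg_sub (starRingEnd ℂ b) a, mul_neg, neg_div_neg_eq]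
  have core := bordered_det_aux (Matrix.of fun i j => S (σ j) (σ i)) σ
    (fun j => starRingEnd ℂ (σ j)) (fun i => Complex.exp (Complex.I * x * σ i))
    (fun i => Complex.exp (Complex.I * x * starRingEnd ℂ (σ i)))
    (fun j => S (σ j) z) (fun i => S (starRingEnd ℂ z) (σ i)) z (Complex.exp (Complex.I * x * z))
    (fun _ => Complex.exp_ne_zero _) (fun _ => Complex.exp_ne_zero _) (Complex.exp_ne_zero _)
    (fun i j => by
      simp only [Matrix.of_apply]
      rw [hSm, two_sin_aux])
    (fun j => by rw [hSm, two_sin_aux])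
    (fun i => by
      have h := hSm (starRingEnd ℂ z) (σ i)
      rw [Complex.conj_conj] at h
      rw [← two_sin_aux, ← neg_sub (σ i) z, neg_mul, h, mul_neg, Complex.sin_neg, mul_neg])
  have hP : (∏ i, (z - starRingEnd ℂ (σ i))) ≠ 0 :=
    Finset.prod_ne_zero_iff.mpr fun i _ => sub_ne_zero.mpr (hz1 i)
  rw [Finset.prod_div_distrib, div_mul_eq_mul_div, eq_div_iff hP, RingHom.map_det]
  rw [← Matrix.det_submatrix_equiv_self (finSumFinEquiv : Fin n ⊕ Fin 1 ≃ Fin (n + 1))]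
  rw [← Matrix.det_submatrix_equiv_self (finSumFinEquiv : Fin n ⊕ Fin 1 ≃ Fin (n + 1))
    ((starRingEnd ℂ).mapMatrix _)]
  rw [← Matrix.det_transpose (Matrix.submatrix ((starRingEnd ℂ).mapMatrix _) _ _)]
  have hl : ∀ i : Fin n, Fin.castAdd 1 i = Fin.castSucc i := fun _ => rfl
  have hr : ∀ i : Fin 1, Fin.natAdd n i = Fin.last n := fun i => by
    ext; simp
  convert core using 2
  · congr 1
    ext i j
    rcases i with i | i <;> rcases j with j | j <;>
      simp [hl, hr, -Fin.natAdd_eq_addNat]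
  · congr 1
    ext i j
    rcases i with i | i <;> rcases j with j | j <;>
      simp [hl, hr, hconj, ← Complex.exp_conj, -Fin.natAdd_eq_addNat]
end
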